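/- Let P be a finite set of points in the plane and let a, b ∈ P be a closest pair in the L∞-metric, i.e., a ≠ b and ‖a − b‖∞ ≤ ‖u − v‖∞ for all distinct u, v ∈ P. Then (a, b) is an edge of the L∞-Delaunay graph of P: there exist c ∈ ℝ² and r > 0 with ‖a − c‖∞ = ‖b − c‖∞ = r and ‖p − c‖∞ ≥ r for every p ∈ P. Consequently d_T(a, b) = ‖a − b‖₂ ≤ |a₁ − b₁| + |a₂ − b₂|. -/

import Mathlib

open Real

noncomputable section

/-- The `L∞` norm of a point of the plane. -/
def linf (u : ℝ × ℝ) : ℝ := max |u.1| |u.2|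

/-- The `L₁` norm of a point of the plane. -/
def l1 (u : ℝ × ℝ) : ℝ := |u.1| + |u.2|

/-- The Euclidean (`L₂`) norm of a point of the plane. -/
def l2 (u : ℝ × ℝ) : ℝ := Real.sqrt (u.1 ^ 2 + u.2 ^ 2)

/-- `u` and `v` are joined by an edge of the Delaunay graph of `P` with respect to the
norm `N`: they are distinct and there is an `N`-ball (of positive radius) having both on
its boundary and no point of `P` in its interior. -/
def IsDelaunayEdge (N : ℝ × ℝ → ℝ) (P : Finset (ℝ × ℝ)) (u v : ℝ × ℝ) : Prop :=
  u ≠ v ∧ ∃ (c : ℝ × ℝ) (r : ℝ), 0 < r ∧ N (u - c) = r ∧ N (v - c) = r ∧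
    ∀ p ∈ P, r ≤ N (p - c)

/-- `L` is the total Euclidean length of some finite path from `a` to `b` all of whose
edges are edges of the `N`-Delaunay graph of `P`. -/
def IsPathLength (N : ℝ × ℝ → ℝ) (P : Finset (ℝ × ℝ)) (a b : ℝ × ℝ) (L : ℝ) : Prop :=
  ∃ (n : ℕ) (p : Fin (n + 1) → ℝ × ℝ), p 0 = a ∧ p (Fin.last n) = b ∧
    (∀ i : Fin n, IsDelaunayEdge N P (p i.castSucc) (p i.succ)) ∧
    L = ∑ i : Fin n, l2 (p i.succ - p i.castSucc)

/-- The graph distance between `a` and `b` in the `N`-Delaunay graph of `P`: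
the infimum of Euclidean path lengths. -/
def dT (N : ℝ × ℝ → ℝ) (P : Finset (ℝ × ℝ)) (a b : ℝ × ℝ) : ℝ :=
  sInf {L : ℝ | IsPathLength N P a b L}

/-- `P` is in general position for the `L∞`-metric: no four points of `P` lie on the
boundary of a common axis-aligned square, and no two points share an `x`- or a
`y`-coordinate. -/
def GenPosInf (P : Finset (ℝ × ℝ)) : Prop :=
  (∀ (c : ℝ × ℝ) (r : ℝ), (P.filter (fun p => linf (p - c) = r)).card ≤ 3) ∧
  (∀ u ∈ P, ∀ v ∈ P, u ≠ v → u.1 ≠ v.1 ∧ u.2 ≠ v.2)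

/-- `P` is in general position for the `L₁`-metric: no four points of `P` lie on the
boundary of a common `L₁`-ball, and no two points have equal coordinate sums or equal
coordinate differences. -/
def GenPos1 (P : Finset (ℝ × ℝ)) : Prop :=
  (∀ (c : ℝ × ℝ) (r : ℝ), (P.filter (fun p => l1 (p - c) = r)).card ≤ 3) ∧
  (∀ u ∈ P, ∀ v ∈ P, u ≠ v → u.1 + u.2 ≠ v.1 + v.2 ∧ u.1 - u.2 ≠ v.1 - v.2)

/-! The ball centred at the midpoint of `a` and `b` with radius `N (a - b) / 2` has both points on
its boundary. If `b` is a nearest neighbour of `a`, every point `x ≠ a` of `P` satisfies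
`N (x - a) ≥ N (a - b)`; as `a` is only `N (a - b) / 2` away from the midpoint, `x` is at least
`N (a - b) / 2` away from it. Hence `ab` is an edge, and by the triangle inequality a shortest
path. -/

section Midpoint

variable {E : Type*} [AddCommGroup E] [Module ℝ E] (N : Seminorm ℝ E)

lemma seminorm_left_sub_midpoint (a b : E) : N (a - midpoint ℝ a b) = N (a - b) / 2 := by
  rw [left_sub_midpoint, map_smul_eq_mul, invOf_eq_inv, Real.norm_of_nonneg (by norm_num)]
  ring

lemma seminorm_right_sub_midpoint (a b : E) : N (b - midpoint ℝ a b) = N (a - b) / 2 := by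
  rw [midpoint_comm, seminorm_left_sub_midpoint, map_sub_rev]

lemma half_le_seminorm_sub_midpoint {a b x : E} (h : N (a - b) ≤ N (x - a)) :
    N (a - b) / 2 ≤ N (x - midpoint ℝ a b) := by
  have triangle : N (x - a) ≤ N (x - midpoint ℝ a b) + N (a - midpoint ℝ a b) := by
    simpa only [sub_sub_sub_cancel_right] using
      map_sub_le_add N (x - midpoint ℝ a b) (a - midpoint ℝ a b)
  rw [seminorm_left_sub_midpoint] at triangle
  linarith

end Midpoint

lemma isDelaunayEdge_of_nearest (N : Seminorm ℝ (ℝ × ℝ)) {P : Finset (ℝ × ℝ)} {a b : ℝ × ℝ}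
    (hab : 0 < N (a - b)) (hmin : ∀ p ∈ P, p ≠ a → N (a - b) ≤ N (p - a)) :
    IsDelaunayEdge N P a b := by
  have hne : a ≠ b := by
    rintro rfl
    simp at hab
  refine ⟨hne, midpoint ℝ a b, N (a - b) / 2, half_pos hab, seminorm_left_sub_midpoint N a b,
    seminorm_right_sub_midpoint N a b, fun p hp ↦ ?_⟩
  rcases eq_or_ne p a with rfl | hpa
  · exact (seminorm_left_sub_midpoint N p b).ge
  · exact half_le_seminorm_sub_midpoint N (hmin p hp hpa)

lemma dist_le_sum_fin_dist {X : Type*} [PseudoMetricSpace X] {n : ℕ} (p : Fin (n + 1) → X) :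
    dist (p 0) (p (Fin.last n)) ≤ ∑ i : Fin n, dist (p i.castSucc) (p i.succ) := by
  induction n with
  | zero => simp
  | succ n ih =>
    rw [Fin.sum_univ_castSucc]
    exact (dist_triangle _ (p (Fin.last n).castSucc) _).trans
      (add_le_add_left (ih fun i ↦ p i.castSucc) _)

lemma l2_sub_eq_dist (u v : ℝ × ℝ) :
    l2 (u - v) = dist (Complex.equivRealProd.symm u) (Complex.equivRealProd.symm v) := by
  simp [l2, Complex.dist_eq_re_im]

lemma l2_sub_comm (u v : ℝ × ℝ) : l2 (u - v) = l2 (v - u) := by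
  simp only [l2_sub_eq_dist, dist_comm]

lemma l2_le_l1 (u : ℝ × ℝ) : l2 u ≤ l1 u := by
  simpa [l2, l1, Complex.norm_eq_sqrt_sq_add_sq] using
    Complex.norm_le_abs_re_add_abs_im (Complex.equivRealProd.symm u)

section GraphDistance

variable {N : ℝ × ℝ → ℝ} {P : Finset (ℝ × ℝ)} {a b : ℝ × ℝ}

lemma IsPathLength.l2_sub_le {L : ℝ} (h : IsPathLength N P a b L) : l2 (a - b) ≤ L := by
  obtain ⟨n, p, rfl, rfl, -, rfl⟩ := h
  simp only [l2_sub_comm (p (Fin.succ _)), l2_sub_eq_dist]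
  exact dist_le_sum_fin_dist fun i ↦ Complex.equivRealProd.symm (p i)

lemma IsDelaunayEdge.isPathLength (h : IsDelaunayEdge N P a b) :
    IsPathLength N P a b (l2 (a - b)) :=
  ⟨1, ![a, b], rfl, rfl, by simpa using h, by simp [l2_sub_comm a b]⟩

lemma IsDelaunayEdge.dT_eq (h : IsDelaunayEdge N P a b) : dT N P a b = l2 (a - b) :=
  IsLeast.csInf_eq ⟨h.isPathLength, fun _ ↦ IsPathLength.l2_sub_le⟩

end GraphDistance

lemma linf_eq_normSeminorm : linf = normSeminorm ℝ (ℝ × ℝ) := rfl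

theorem closest_pair_is_edge_general (N : Seminorm ℝ (ℝ × ℝ)) (P : Finset (ℝ × ℝ))
    (a b : ℝ × ℝ) (hab : 0 < N (a - b)) (hmin : ∀ p ∈ P, p ≠ a → N (a - b) ≤ N (p - a)) :
    IsDelaunayEdge N P a b ∧
    dT N P a b = l2 (a - b) ∧
    l2 (a - b) ≤ |a.1 - b.1| + |a.2 - b.2| :=
  have edge := isDelaunayEdge_of_nearest N hab hmin
  ⟨edge, edge.dT_eq, l2_le_l1 (a - b)⟩

/-- **Lemma (base case).** A closest pair of `P` in the `L∞`-metric is an edge of the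
`L∞`-Delaunay graph of `P`, and its graph distance equals its Euclidean distance,
which is at most `|a₁ − b₁| + |a₂ − b₂|`. -/
theorem closest_pair_is_edge
    (P : Finset (ℝ × ℝ)) (a b : ℝ × ℝ) (ha : a ∈ P) (hb : b ∈ P) (hab : a ≠ b)
    (hmin : ∀ u ∈ P, ∀ v ∈ P, u ≠ v → linf (a - b) ≤ linf (u - v)) :
    IsDelaunayEdge linf P a b ∧
    dT linf P a b = l2 (a - b) ∧
    l2 (a - b) ≤ |a.1 - b.1| + |a.2 - b.2| := by
  rw [linf_eq_normSeminorm] at hmin ⊢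
  exact closest_pair_is_edge_general _ P a b (norm_sub_pos_iff.mpr hab)
    fun p hp ↦ hmin p hp a ha
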